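/- arXiv:math/0506117 — 3 statements merged into one kernel-verified Lean document; each statement's English description precedes it below -/
import Mathlib

section
/- Let m ≥ 1 and let k₁,…,k_m be positive integers with k_m ≥ 2. Then for every complex z with |z| < 1, the multiple polylogarithm satisfies the differential equation d/dz Li_{k₁,…,k_{m−1},k_m}(z) = (1/z) · Li_{k₁,…,k_{m−1},k_m−1}(z) for z ≠ 0, i.e. the function z ↦ Li_{k₁,…,k_m}(z) has derivative Li_{k₁,…,k_{m−1},k_m−1}(z)/z at every nonzero z in the open unit disc. -/
/-- Index type for multiple polylogarithm sums: strictly increasing tuples of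
positive integers `0 < n₁ < ⋯ < n_{m+1}`. -/
def MPLIdx (m : ℕ) : Type :=
  {f : Fin (m + 1) → ℕ // StrictMono f ∧ ∀ i, 0 < f i}

/-- The one-variable multiple polylogarithm
`Li_{k₁,…,k_{m+1}}(z) = Σ_{0<n₁<⋯<n_{m+1}} z^{n_{m+1}}/(n₁^{k₁}⋯n_{m+1}^{k_{m+1}})`. -/
noncomputable def MPL (m : ℕ) (k : Fin (m + 1) → ℕ) (z : ℂ) : ℂ :=
  ∑' n : MPLIdx m, z ^ (n.1 (Fin.last m)) / ∏ i, ((n.1 i : ℂ)) ^ k i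

theorem summable_prod_geom (s : ℝ) (h0 : 0 ≤ s) (h1 : s < 1) (m : ℕ) :
    Summable (fun f : Fin m → ℕ => ∏ i, s ^ f i) := by
  induction m with
  | zero => exact (hasSum_fintype _).summable
  | succ m ih =>
    have h := (summable_geometric_of_lt_one h0 h1).mul_of_nonneg ih
      (fun n => pow_nonneg h0 n) (fun f => Finset.prod_nonneg fun i _ => pow_nonneg h0 _)
    rw [← (Fin.consEquiv (fun _ : Fin (m + 1) => ℕ)).summable_iff]
    refine h.congr fun p => ?_
    simp [Fin.prod_univ_succ, Fin.consEquiv]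

theorem summable_mpl_geom (m : ℕ) (r : ℝ) (h0 : 0 < r) (h1 : r < 1) :
    Summable (fun n : MPLIdx m => r ^ (n.1 (Fin.last m))) := by
  obtain ⟨s, hs0, hs⟩ : ∃ s : ℝ, 0 ≤ s ∧ s ^ (m + 1) = r :=
    ⟨r ^ (((m + 1 : ℕ) : ℝ)⁻¹), Real.rpow_nonneg h0.le _,
      Real.rpow_inv_natCast_pow h0.le (Nat.succ_ne_zero m)⟩
  have hs1 : s < 1 := by
    by_contra h
    have := one_le_pow₀ (not_lt.mp h) (n := m + 1)
    linarith
  have hS := (summable_prod_geom s hs0 hs1 (m + 1)).comp_injective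
    (i := fun n : MPLIdx m => n.1) Subtype.val_injective
  refine Summable.of_nonneg_of_le (fun n => pow_nonneg h0.le _) (fun n => ?_) hS
  have : r ^ (n.1 (Fin.last m)) = ∏ i : Fin (m + 1), s ^ (n.1 (Fin.last m)) := by
    rw [Finset.prod_const, ← hs, ← pow_mul, ← pow_mul, mul_comm]; simp
  rw [this]
  exact Finset.prod_le_prod (fun i _ => pow_nonneg hs0 _) fun i _ =>
    pow_le_pow_of_le_one hs0 hs1.le (n.2.1.monotone (Fin.le_last i))

/-- for positive integers `k₁,…,k_m` with `k_m ≥ 2`, at every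
nonzero `z` in the open unit disc,
`d/dz Li_{k₁,…,k_{m−1},k_m}(z) = Li_{k₁,…,k_{m−1},k_m−1}(z)/z`. -/
theorem mpl_hasDerivAt_of_last_ge_two (m : ℕ) (k : Fin (m + 1) → ℕ)
    (hk : ∀ i, 1 ≤ k i) (hklast : 2 ≤ k (Fin.last m)) :
    ∀ z : ℂ, ‖z‖ < 1 → z ≠ 0 →
      HasDerivAt (MPL m k)
        (MPL m (Function.update k (Fin.last m) (k (Fin.last m) - 1)) z / z) z := by
  intro z hz hz0
  obtain ⟨r, hr, hr1⟩ := exists_between hz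
  have hr0 : 0 < r := (norm_nonneg z).trans_lt hr
  set k' := Function.update k (Fin.last m) (k (Fin.last m) - 1) with hk'
  have hprod : ∀ n : MPLIdx m, ∏ i, ((n.1 i : ℂ)) ^ k i
      = (n.1 (Fin.last m) : ℂ) * ∏ i, ((n.1 i : ℂ)) ^ k' i := by
    intro n
    obtain ⟨j, hj⟩ : ∃ j, k (Fin.last m) = j + 1 := ⟨k (Fin.last m) - 1, by omega⟩
    rw [Fin.prod_univ_castSucc, Fin.prod_univ_castSucc]
    have h1 : ∀ i : Fin m, k' i.castSucc = k i.castSucc := fun i => by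
      simp [hk', Function.update_of_ne (Fin.castSucc_lt_last i).ne]
    have h2 : k' (Fin.last m) = j := by simp [hk', hj]
    simp only [h1, h2, hj, pow_succ]
    ring
  have hD := hasDerivAt_tsum_of_isPreconnected (𝕜 := ℂ) (t := Metric.ball (0 : ℂ) r)
    (u := fun n : MPLIdx m => r⁻¹ * r ^ (n.1 (Fin.last m)))
    (g := fun (n : MPLIdx m) (y : ℂ) => y ^ (n.1 (Fin.last m)) / ∏ i, ((n.1 i : ℂ)) ^ k i)
    (g' := fun (n : MPLIdx m) (y : ℂ) =>
      y ^ (n.1 (Fin.last m) - 1) / ∏ i, ((n.1 i : ℂ)) ^ k' i)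
    (y₀ := 0) (y := z)
    ((summable_mpl_geom m r hr0 hr1).mul_left _) Metric.isOpen_ball
    (convex_ball (0 : ℂ) r).isPreconnected ?_ ?_ (by simpa using hr0) ?_ (by simpa using hr)
  · refine HasDerivAt.congr_deriv (f := MPL m k) hD ?_
    rw [MPL, ← tsum_div_const]
    refine tsum_congr fun n => ?_
    obtain ⟨j, hj⟩ : ∃ j, n.1 (Fin.last m) = j + 1 :=
      ⟨n.1 (Fin.last m) - 1, by have := n.2.2 (Fin.last m); omega⟩
    rw [hj, Nat.add_sub_cancel, pow_succ, div_right_comm, mul_div_assoc, div_self hz0, mul_one]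
  · intro n y _
    have hN : (n.1 (Fin.last m) : ℂ) ≠ 0 := by exact_mod_cast (n.2.2 (Fin.last m)).ne'
    refine ((hasDerivAt_pow (n.1 (Fin.last m)) y).div_const
      (∏ i, ((n.1 i : ℂ)) ^ k i)).congr_deriv ?_
    rw [hprod, mul_div_mul_left _ _ hN]
  · intro n y hy
    have hy' : ‖y‖ ≤ r := by simpa using (Metric.mem_ball.mp hy).le
    obtain ⟨j, hj⟩ : ∃ j, n.1 (Fin.last m) = j + 1 :=
      ⟨n.1 (Fin.last m) - 1, by have := n.2.2 (Fin.last m); omega⟩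
    have hone : 1 ≤ ‖∏ i, ((n.1 i : ℂ)) ^ k' i‖ := by
      rw [norm_prod]
      rw [← Finset.prod_const_one (s := (Finset.univ : Finset (Fin (m + 1))))]
      refine Finset.prod_le_prod (fun _ _ => zero_le_one) fun i _ => ?_
      rw [norm_pow, Complex.norm_natCast]
      exact one_le_pow₀ (by exact_mod_cast n.2.2 i)
    rw [norm_div, norm_pow, hj, Nat.add_sub_cancel]
    have : r⁻¹ * r ^ (j + 1) = r ^ j := by rw [pow_succ]; field_simp
    rw [this]
    exact (div_le_self (by positivity) hone).trans (pow_le_pow_left₀ (norm_nonneg _) hy' _)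
  · refine summable_zero.congr fun n => ?_
    simp [(n.2.2 (Fin.last m)).ne']
end

section
/- Let k₁, k₂ be positive integers. For every complex z with |z| < 1, the one-variable multiple polylogarithms satisfy the integral shuffle product formula: Li_{k₁}(z)·Li_{k₂}(z) = Σ_{i=0}^{k₁−1} C(k₂−1+i, i)·Li_{k₁−i, k₂+i}(z) + Σ_{j=0}^{k₂−1} C(k₁−1+j, j)·Li_{k₂−j, k₁+j}(z), where C(·,·) denotes the binomial coefficient. -/
/-- The classical polylogarithm `Li_k(z) = Σ_{n≥1} z^n/n^k`. -/
noncomputable def cLi1 (k : ℕ) (z : ℂ) : ℂ :=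
  ∑' n : ℕ+, z ^ (n : ℕ) / ((n : ℕ) : ℂ) ^ k

/-- The depth-two multiple polylogarithm
`Li_{a,b}(z) = Σ_{0<n₁<n₂} z^{n₂}/(n₁^a n₂^b)`. -/
noncomputable def cLi2 (a b : ℕ) (z : ℂ) : ℂ :=
  ∑' q : {q : ℕ+ × ℕ+ // q.1 < q.2},
    z ^ ((q.1.2 : ℕ)) / (((q.1.1 : ℕ) : ℂ) ^ a * ((q.1.2 : ℕ) : ℂ) ^ b)

/-- auxiliary partial-fraction sum -/
noncomputable def auxS (x w : ℂ) (a b : ℕ) : ℂ :=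
  ∑ i ∈ Finset.range a, (Nat.choose (b + i - 1) i : ℂ) * (x ^ (a - i) * w ^ (b + i))

lemma auxS_rec (x w : ℂ) (a b : ℕ) :
    auxS x w (a+1) (b+1) = w * (auxS x w (a+1) b + auxS x w a (b+1)) := by
  unfold auxS
  rw [Finset.sum_range_succ', Finset.sum_range_succ' _ a]
  have : ∀ i ∈ Finset.range a, (Nat.choose (b + 1 + (i+1) - 1) (i+1) : ℂ) * (x ^ (a + 1 - (i+1)) * w ^ (b + 1 + (i+1)))
      = w * ((Nat.choose (b + (i+1) - 1) (i+1) : ℂ) * (x ^ (a + 1 - (i+1)) * w ^ (b + (i+1)))) +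
        w * ((Nat.choose (b + 1 + i - 1) i : ℂ) * (x ^ (a - i) * w ^ (b + 1 + i))) := by
    intro i _
    have e1 : b + 1 + (i+1) - 1 = (b + i) + 1 := by omega
    have e2 : b + (i+1) - 1 = b + i := by omega
    have e3 : b + 1 + i - 1 = b + i := by omega
    have e4 : a + 1 - (i+1) = a - i := by omega
    rw [e1, e2, e3, e4, Nat.choose_succ_succ]
    push_cast
    ring
  rw [Finset.sum_congr rfl this, Finset.sum_add_distrib, ← Finset.mul_sum, ← Finset.mul_sum]
  simp
  ring

lemma auxS_zero_left (x w : ℂ) (b : ℕ) : auxS x w 0 b = 0 := by simp [auxS]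

lemma auxS_zero_right (x w : ℂ) (a : ℕ) : auxS x w (a+1) 0 = x ^ (a+1) := by
  unfold auxS
  rw [Finset.sum_range_succ']
  simp

lemma aux_pf (x y w : ℂ) (h : x * y = w * (x + y)) : ∀ a b : ℕ, 1 ≤ a + b →
    x ^ a * y ^ b = auxS x w a b + auxS y w b a
  | 0, 0, h0 => by omega
  | 0, b+1, _ => by rw [auxS_zero_left, auxS_zero_right]; simp
  | a+1, 0, _ => by rw [auxS_zero_left, auxS_zero_right]; simp
  | a+1, b+1, _ => by
    have i1 := aux_pf x y w h (a+1) b (by omega)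
    have i2 := aux_pf x y w h a (b+1) (by omega)
    rw [auxS_rec, auxS_rec]
    calc x ^ (a+1) * y ^ (b+1) = (x * y) * (x ^ a * y ^ b) := by ring
      _ = w * (x ^ (a+1) * y ^ b + x ^ a * y ^ (b+1)) := by rw [h]; ring
      _ = _ := by rw [i1, i2]; ring

/-- reindexing -/
def auxE : ℕ+ × ℕ+ ≃ {q : ℕ+ × ℕ+ // q.1 < q.2} where
  toFun p := ⟨(p.1, p.1 + p.2), PNat.lt_add_right _ _⟩
  invFun q := (q.1.1, q.1.2 - q.1.1)
  left_inv p := by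
    ext
    · rfl
    · apply PNat.eq
      show ((p.1 + p.2 - p.1 : ℕ+) : ℕ) = p.2
      rw [PNat.sub_coe, if_pos (PNat.lt_add_right _ _), PNat.add_coe]
      omega
  right_inv q := by
    obtain ⟨⟨m, n⟩, h⟩ := q
    ext
    · rfl
    · simp only [PNat.add_sub_of_lt h]

noncomputable def auxT (z : ℂ) (a b : ℕ) (p : ℕ+ × ℕ+) : ℂ :=
  z ^ ((p.1 : ℕ) + (p.2 : ℕ)) * ((((p.1 : ℕ) : ℂ)⁻¹) ^ a * ((((p.1 : ℕ) : ℂ) + ((p.2 : ℕ) : ℂ))⁻¹) ^ b)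

lemma cLi2_eq (a b : ℕ) (z : ℂ) : cLi2 a b z = ∑' p : ℕ+ × ℕ+, auxT z a b p := by
  unfold cLi2
  rw [← auxE.tsum_eq]
  refine tsum_congr fun p => ?_
  simp [auxE, auxT, div_eq_mul_inv, mul_comm]

lemma summable_geo (z : ℂ) (hz : ‖z‖ < 1) : Summable fun n : ℕ+ => ‖z‖ ^ (n : ℕ) :=
  (summable_geometric_of_lt_one (norm_nonneg z) hz).comp_injective PNat.coe_injective

lemma auxT_summable (a b : ℕ) (z : ℂ) (hz : ‖z‖ < 1) : Summable (auxT z a b) := by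
  have h := (summable_geo z hz).mul_of_nonneg (summable_geo z hz)
    (fun n => by positivity) (fun n => by positivity)
  refine Summable.of_norm_bounded h fun p => ?_
  have h1 : (1:ℝ) ≤ ((p.1 : ℕ) : ℝ) := by exact_mod_cast p.1.pos
  have h3 : (1:ℝ) ≤ ((p.1 : ℕ) : ℝ) + ((p.2 : ℕ) : ℝ) := by
    have : (0:ℝ) ≤ ((p.2 : ℕ) : ℝ) := by positivity
    linarith
  have n3 : ‖(((p.1 : ℕ) : ℂ) + ((p.2 : ℕ) : ℂ))‖ = ((p.1 : ℕ) : ℝ) + ((p.2 : ℕ) : ℝ) := by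
    rw [← Nat.cast_add, Complex.norm_natCast]; push_cast; rfl
  unfold auxT
  rw [norm_mul, norm_mul, norm_pow, norm_pow, norm_pow, norm_inv, norm_inv, n3,
    Complex.norm_natCast, ← pow_add]
  refine mul_le_of_le_one_right (by positivity) (mul_le_one₀ ?_ (by positivity) ?_)
  · exact pow_le_one₀ (by positivity) (inv_le_one_of_one_le₀ h1)
  · exact pow_le_one₀ (by positivity) (inv_le_one_of_one_le₀ h3)

lemma cLi1_summable (k : ℕ) (z : ℂ) (hz : ‖z‖ < 1) :
    Summable fun n : ℕ+ => ‖z ^ (n : ℕ) / ((n : ℕ) : ℂ) ^ k‖ := by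
  refine Summable.of_nonneg_of_le (fun _ => norm_nonneg _) (fun n => ?_) (summable_geo z hz)
  have h1 : (1:ℝ) ≤ ((n : ℕ) : ℝ) := by exact_mod_cast n.pos
  rw [norm_div, norm_pow, norm_pow, Complex.norm_natCast]
  exact div_le_self (by positivity) (one_le_pow₀ h1)


/-- for positive integers `k₁, k₂` and `|z| < 1`, the integral
shuffle product formula
`Li_{k₁}(z)·Li_{k₂}(z) = Σ_{i=0}^{k₁−1} C(k₂−1+i,i)·Li_{k₁−i,k₂+i}(z)
                       + Σ_{j=0}^{k₂−1} C(k₁−1+j,j)·Li_{k₂−j,k₁+j}(z)`. -/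
theorem mpl_shuffle (k₁ k₂ : ℕ) (h₁ : 1 ≤ k₁) (h₂ : 1 ≤ k₂) :
    ∀ z : ℂ, ‖z‖ < 1 →
      cLi1 k₁ z * cLi1 k₂ z =
        (∑ i ∈ Finset.range k₁, (Nat.choose (k₂ - 1 + i) i : ℂ) * cLi2 (k₁ - i) (k₂ + i) z) +
        (∑ j ∈ Finset.range k₂, (Nat.choose (k₁ - 1 + j) j : ℂ) * cLi2 (k₂ - j) (k₁ + j) z) := by
  intro z hz
  have key : ∀ p : ℕ+ × ℕ+, (z ^ (p.1 : ℕ) / ((p.1 : ℕ) : ℂ) ^ k₁) * (z ^ (p.2 : ℕ) / ((p.2 : ℕ) : ℂ) ^ k₂)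
      = (∑ i ∈ Finset.range k₁, (Nat.choose (k₂ - 1 + i) i : ℂ) * auxT z (k₁ - i) (k₂ + i) p) +
        (∑ j ∈ Finset.range k₂, (Nat.choose (k₁ - 1 + j) j : ℂ) * auxT z (k₂ - j) (k₁ + j) p.swap) := by
    rintro ⟨m, n⟩
    have hm : ((m : ℕ) : ℂ) ≠ 0 := by exact_mod_cast m.ne_zero
    have hn : ((n : ℕ) : ℂ) ≠ 0 := by exact_mod_cast n.ne_zero
    have hmn : ((m : ℕ) : ℂ) + ((n : ℕ) : ℂ) ≠ 0 := by
      have := m.pos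
      exact_mod_cast (by omega : (m : ℕ) + (n : ℕ) ≠ 0)
    have hpf := aux_pf (((m : ℕ) : ℂ)⁻¹) (((n : ℕ) : ℂ)⁻¹) ((((m : ℕ) : ℂ) + ((n : ℕ) : ℂ))⁻¹)
      (by field_simp; try ring) k₁ k₂ (by omega)
    have e : (z ^ (m : ℕ) / ((m : ℕ) : ℂ) ^ k₁) * (z ^ (n : ℕ) / ((n : ℕ) : ℂ) ^ k₂)
        = z ^ ((m : ℕ) + (n : ℕ)) * ((((m : ℕ) : ℂ)⁻¹) ^ k₁ * (((n : ℕ) : ℂ)⁻¹) ^ k₂) := by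
      rw [div_eq_mul_inv, div_eq_mul_inv, inv_pow, inv_pow, pow_add]; ring
    simp only [e, hpf, mul_add, auxS, Finset.mul_sum]
    congr 1
    · refine Finset.sum_congr rfl fun i _ => ?_
      rw [show k₂ - 1 + i = k₂ + i - 1 by omega]
      simp only [auxT]
      ring
    · refine Finset.sum_congr rfl fun i _ => ?_
      rw [show k₁ - 1 + i = k₁ + i - 1 by omega]
      simp only [auxT, Prod.swap, add_comm (n : ℕ) (m : ℕ), add_comm ((n : ℕ) : ℂ) ((m : ℕ) : ℂ)]
      ring
  have hs : ∀ a b : ℕ, Summable fun p : ℕ+ × ℕ+ => auxT z a b p.swap := fun a b =>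
    (auxT_summable a b z hz).comp_injective Prod.swap_injective
  have ht : ∀ a b : ℕ, ∑' p : ℕ+ × ℕ+, auxT z a b p.swap = cLi2 a b z := fun a b => by
    rw [cLi2_eq]
    exact (Equiv.prodComm ℕ+ ℕ+).tsum_eq (auxT z a b)
  unfold cLi1
  rw [tsum_mul_tsum_of_summable_norm (cLi1_summable k₁ z hz) (cLi1_summable k₂ z hz),
    tsum_congr key, Summable.tsum_add, Summable.tsum_finsetSum, Summable.tsum_finsetSum]
  · simp only [tsum_mul_left, ht, ← cLi2_eq]
  · exact fun i _ => (hs _ _).mul_left _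
  · exact fun i _ => (auxT_summable _ _ z hz).mul_left _
  · exact summable_sum fun i _ => (auxT_summable _ _ z hz).mul_left _
  · exact summable_sum fun i _ => (hs _ _).mul_left _
end

section
/- Let p be a prime and k₁, k₂ positive integers. For every z ∈ ℚ_p with p-adic norm ‖z‖_p < 1, the p-adic multiple polylogarithms satisfy the integral shuffle product formula: Li_{k₁}(z)·Li_{k₂}(z) = Σ_{i=0}^{k₁−1} C(k₂−1+i, i)·Li_{k₁−i, k₂+i}(z) + Σ_{j=0}^{k₂−1} C(k₁−1+j, j)·Li_{k₂−j, k₁+j}(z) in ℚ_p, where C(·,·) denotes the binomial coefficient. -/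
/-- The p-adic polylogarithm `Li_k(z) = Σ_{n≥1} z^n/n^k` on the open p-adic
unit disc. -/
noncomputable def pLi1 (p : ℕ) [Fact p.Prime] (k : ℕ) (z : ℚ_[p]) : ℚ_[p] :=
  ∑' n : ℕ+, z ^ (n : ℕ) / ((n : ℕ) : ℚ_[p]) ^ k

/-- The depth-two p-adic multiple polylogarithm
`Li_{a,b}(z) = Σ_{0<n₁<n₂} z^{n₂}/(n₁^a n₂^b)`. -/
noncomputable def pLi2 (p : ℕ) [Fact p.Prime] (a b : ℕ) (z : ℚ_[p]) : ℚ_[p] :=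
  ∑' q : {q : ℕ+ × ℕ+ // q.1 < q.2},
    z ^ ((q.1.2 : ℕ)) / (((q.1.1 : ℕ) : ℚ_[p]) ^ a * ((q.1.2 : ℕ) : ℚ_[p]) ^ b)


section aux

theorem aux_base {K : Type*} [Field K] (X Y : K) (h : X + Y = 1) (a : ℕ) :
    Y * ∑ i ∈ Finset.range a, X ^ i + X ^ a = 1 := by
  induction a with
  | zero => simp
  | succ a ih =>
    rw [Finset.sum_range_succ]
    have : Y = 1 - X := by rw [← h]; ring
    rw [pow_succ]
    calc _ = (Y * ∑ i ∈ Finset.range a, X ^ i + X ^ a) + X ^ a * (X + Y - 1) := by ring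
      _ = 1 := by rw [ih, h]; ring

theorem aux_step {K : Type*} [Field K] (X Y : K) (h : X + Y = 1) (a b : ℕ) :
    Y ^ (b + 2) * ∑ i ∈ Finset.range a, (Nat.choose (b + 1 + i) i : K) * X ^ i
      = Y ^ (b + 1) * ∑ i ∈ Finset.range a, (Nat.choose (b + i) i : K) * X ^ i
        - (Nat.choose (a + b) (b + 1) : K) * X ^ a * Y ^ (b + 1) := by
  induction a with
  | zero => simp
  | succ a ih =>
    rw [Finset.sum_range_succ, Finset.sum_range_succ, mul_add, mul_add, ih]
    have e1 : Nat.choose (b + 1 + a) a = Nat.choose (a + 1 + b) (b + 1) := by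
      rw [show a + 1 + b = b + 1 + a by ring]
      exact Nat.choose_symm_of_eq_add (by ring)
    have e2 : Nat.choose (b + a) a = Nat.choose (a + b) b := by
      rw [add_comm a b]
      exact Nat.choose_symm_of_eq_add (by ring)
    have e3 : Nat.choose (a + 1 + b) (b + 1) = Nat.choose (a + b) b + Nat.choose (a + b) (b + 1) := by
      rw [show a + 1 + b = (a + b) + 1 by ring, Nat.choose_succ_succ]
    rw [e1, e2, e3]
    have hY : Y = 1 - X := by rw [← h]; ring
    push_cast
    subst hY
    ring

theorem aux_poly {K : Type*} [Field K] (X Y : K) (h : X + Y = 1) (a b : ℕ) :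
    Y ^ (b + 1) * ∑ i ∈ Finset.range (a + 1), (Nat.choose (b + i) i : K) * X ^ i
      + X ^ (a + 1) * ∑ j ∈ Finset.range (b + 1), (Nat.choose (a + j) j : K) * Y ^ j = 1 := by
  induction b with
  | zero => simpa using aux_base X Y h (a + 1)
  | succ b ih =>
    rw [Finset.sum_range_succ _ (b + 1), aux_step X Y h (a + 1) b,
      show a + (b + 1) = a + 1 + b by ring]
    linear_combination ih

theorem aux_pf_s10 {K : Type*} [Field K] (m n : K) (hm : m ≠ 0) (hn : n ≠ 0) (hN : m + n ≠ 0)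
    (a b : ℕ) (ha : 1 ≤ a) (hb : 1 ≤ b) :
    1 / (m ^ a * n ^ b) =
      (∑ i ∈ Finset.range a, (Nat.choose (b - 1 + i) i : K) * (1 / (m ^ (a - i) * (m + n) ^ (b + i))))
      + ∑ j ∈ Finset.range b, (Nat.choose (a - 1 + j) j : K) * (1 / (n ^ (b - j) * (m + n) ^ (a + j))) := by
  obtain ⟨a, rfl⟩ := Nat.exists_eq_add_of_le' ha
  obtain ⟨b, rfl⟩ := Nat.exists_eq_add_of_le' hb
  have key := aux_poly (m / (m + n)) (n / (m + n)) (by field_simp) a b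
  simp only [Nat.add_sub_cancel]
  refine ((mul_one _).symm.trans (congrArg _ key.symm)).trans ?_
  rw [mul_add, Finset.mul_sum, Finset.mul_sum, Finset.mul_sum,
    Finset.mul_sum]
  congr 1
  · refine Finset.sum_congr rfl fun i hi => ?_
    have : a + 1 = (a + 1 - i) + i := by have := Finset.mem_range.1 hi; omega
    generalize a + 1 - i = c at *
    rw [this, pow_add m, pow_add (m + n)]
    simp only [div_pow, pow_add]
    field_simp
  · refine Finset.sum_congr rfl fun i hi => ?_
    have : b + 1 = (b + 1 - i) + i := by have := Finset.mem_range.1 hi; omega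
    generalize b + 1 - i = c at *
    rw [this, pow_add n, pow_add (m + n)]
    simp only [div_pow, pow_add]
    field_simp

theorem aux_norm (p : ℕ) [Fact p.Prime] (n : ℕ) (hn : n ≠ 0) :
    ‖((n : ℚ_[p]))‖⁻¹ ≤ n := by
  rw [Padic.norm_eq_zpow_neg_valuation (by exact_mod_cast hn), Padic.valuation_natCast,
    zpow_neg, inv_inv, zpow_natCast]
  exact_mod_cast Nat.le_of_dvd (Nat.pos_of_ne_zero hn) pow_padicValNat_dvd

theorem aux_summ1 (r : ℝ) (h0 : 0 ≤ r) (h1 : r < 1) (k : ℕ) :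
    Summable fun n : ℕ+ => (n : ℝ) ^ k * r ^ (n : ℕ) :=
  (summable_pow_mul_geometric_of_norm_lt_one k (r := r)
    (by rwa [Real.norm_of_nonneg h0])).comp_injective PNat.coe_injective

theorem aux_summ_one (p : ℕ) [Fact p.Prime] (k : ℕ) (z : ℚ_[p]) (hz : ‖z‖ < 1) :
    Summable fun n : ℕ+ => ‖z ^ (n : ℕ) / ((n : ℕ) : ℚ_[p]) ^ k‖ := by
  refine Summable.of_nonneg_of_le (fun _ => norm_nonneg _) (fun n => ?_)
    (aux_summ1 ‖z‖ (norm_nonneg _) hz k)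
  rw [norm_div, norm_pow, norm_pow, div_eq_mul_inv, mul_comm, ← inv_pow]
  have := aux_norm p n n.ne_zero
  gcongr

theorem aux_summ_two (p : ℕ) [Fact p.Prime] (a b : ℕ) (z : ℚ_[p]) (hz : ‖z‖ < 1) :
    Summable fun q : ℕ+ × ℕ+ => z ^ ((q.1 : ℕ) + (q.2 : ℕ)) /
      (((q.1 : ℕ) : ℚ_[p]) ^ a * (((q.1 : ℕ) : ℚ_[p]) + ((q.2 : ℕ) : ℚ_[p])) ^ b) := by
  apply Summable.of_norm
  have S := ((aux_summ1 ‖z‖ (norm_nonneg _) hz (a + b)).mul_of_nonneg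
    (aux_summ1 ‖z‖ (norm_nonneg _) hz b) (fun _ => by positivity)
      (fun _ => by positivity)).mul_left (2 ^ b : ℝ)
  refine Summable.of_nonneg_of_le (fun _ => norm_nonneg _) (fun q => ?_) S
  obtain ⟨m, n⟩ := q
  have h1 := aux_norm p m m.ne_zero
  have h2 := aux_norm p (m + n) (by positivity)
  have h3 : (((m : ℕ) + (n : ℕ) : ℕ) : ℝ) ≤ 2 * (m : ℝ) * (n : ℝ) := by
    have hm : (1 : ℝ) ≤ (m : ℝ) := by exact_mod_cast m.pos
    have hn : (1 : ℝ) ≤ (n : ℝ) := by exact_mod_cast n.pos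
    push_cast
    nlinarith
  have h4 := h2.trans h3
  rw [Nat.cast_add] at h4
  simp only [norm_div, norm_pow, norm_mul]
  calc ‖z‖ ^ ((m : ℕ) + (n : ℕ)) / (‖((m : ℕ) : ℚ_[p])‖ ^ a * ‖((m : ℕ) : ℚ_[p]) + ((n : ℕ) : ℚ_[p])‖ ^ b)
      = ‖z‖ ^ ((m : ℕ) + (n : ℕ)) * ((‖((m : ℕ) : ℚ_[p])‖⁻¹) ^ a *
        (‖((m : ℕ) : ℚ_[p]) + ((n : ℕ) : ℚ_[p])‖⁻¹) ^ b) := by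
        rw [div_eq_mul_inv, mul_inv, inv_pow, inv_pow]
    _ ≤ ‖z‖ ^ ((m : ℕ) + (n : ℕ)) * ((m : ℝ) ^ a * (2 * (m : ℝ) * (n : ℝ)) ^ b) := by
        gcongr
    _ = _ := by
        rw [mul_pow, mul_pow, pow_add, pow_add]; ring

/-- reindexing -/
def auxEquiv : ℕ+ × ℕ+ ≃ {q : ℕ+ × ℕ+ // q.1 < q.2} where
  toFun q := ⟨(q.1, q.1 + q.2), PNat.lt_add_right q.1 q.2⟩
  invFun q := (q.1.1, q.1.2 - q.1.1)
  left_inv q := by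
    ext
    · rfl
    · simp only [add_comm q.1 q.2, PNat.add_sub]
  right_inv q := by
    obtain ⟨⟨m, n⟩, h⟩ := q
    simp only [PNat.add_sub_of_lt h]

theorem aux_pLi2 (p : ℕ) [Fact p.Prime] (a b : ℕ) (z : ℚ_[p]) :
    pLi2 p a b z = ∑' q : ℕ+ × ℕ+, z ^ ((q.1 : ℕ) + (q.2 : ℕ)) /
      (((q.1 : ℕ) : ℚ_[p]) ^ a * (((q.1 : ℕ) : ℚ_[p]) + ((q.2 : ℕ) : ℚ_[p])) ^ b) := by
  rw [pLi2, ← auxEquiv.tsum_eq]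
  simp [auxEquiv]

theorem aux_hasSum (p : ℕ) [Fact p.Prime] (a b : ℕ) (z : ℚ_[p]) (hz : ‖z‖ < 1) :
    HasSum (fun q : ℕ+ × ℕ+ => z ^ ((q.1 : ℕ) + (q.2 : ℕ)) /
      (((q.1 : ℕ) : ℚ_[p]) ^ a * (((q.1 : ℕ) : ℚ_[p]) + ((q.2 : ℕ) : ℚ_[p])) ^ b))
      (pLi2 p a b z) := by
  rw [aux_pLi2]
  exact (aux_summ_two p a b z hz).hasSum

theorem aux_hasSum' (p : ℕ) [Fact p.Prime] (a b : ℕ) (z : ℚ_[p]) (hz : ‖z‖ < 1) :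
    HasSum (fun q : ℕ+ × ℕ+ => z ^ ((q.1 : ℕ) + (q.2 : ℕ)) /
      (((q.2 : ℕ) : ℚ_[p]) ^ a * (((q.1 : ℕ) : ℚ_[p]) + ((q.2 : ℕ) : ℚ_[p])) ^ b))
      (pLi2 p a b z) := by
  have := (Equiv.prodComm ℕ+ ℕ+).hasSum_iff.2 (aux_hasSum p a b z hz)
  convert this using 2 with q
  simp [add_comm]

end aux

/-- for a prime `p`, positive integers `k₁, k₂`, and `z ∈ ℚ_p`
with `‖z‖_p < 1`, the integral shuffle product formula
`Li_{k₁}(z)·Li_{k₂}(z) = Σ_{i=0}^{k₁−1} C(k₂−1+i,i)·Li_{k₁−i,k₂+i}(z)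
                       + Σ_{j=0}^{k₂−1} C(k₁−1+j,j)·Li_{k₂−j,k₁+j}(z)`
holds in `ℚ_p`. -/
theorem padic_mpl_shuffle (p : ℕ) [Fact p.Prime] (k₁ k₂ : ℕ)
    (h₁ : 1 ≤ k₁) (h₂ : 1 ≤ k₂) :
    ∀ z : ℚ_[p], ‖z‖ < 1 →
      pLi1 p k₁ z * pLi1 p k₂ z =
        (∑ i ∈ Finset.range k₁,
          (Nat.choose (k₂ - 1 + i) i : ℚ_[p]) * pLi2 p (k₁ - i) (k₂ + i) z) +
        (∑ j ∈ Finset.range k₂,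
          (Nat.choose (k₁ - 1 + j) j : ℚ_[p]) * pLi2 p (k₂ - j) (k₁ + j) z) := by
  intro z hz
  have hR := (hasSum_sum (s := Finset.range k₁) fun i _ =>
    (aux_hasSum p (k₁ - i) (k₂ + i) z hz).mul_left (Nat.choose (k₂ - 1 + i) i : ℚ_[p])).add
    (hasSum_sum (s := Finset.range k₂) fun j _ =>
    (aux_hasSum' p (k₂ - j) (k₁ + j) z hz).mul_left (Nat.choose (k₁ - 1 + j) j : ℚ_[p]))
  rw [← hR.tsum_eq, pLi1, pLi1, tsum_mul_tsum_of_summable_norm (aux_summ_one p k₁ z hz)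
    (aux_summ_one p k₂ z hz)]
  refine tsum_congr fun q => ?_
  obtain ⟨m, n⟩ := q
  have hm : ((m : ℕ) : ℚ_[p]) ≠ 0 := by exact_mod_cast m.ne_zero
  have hn : ((n : ℕ) : ℚ_[p]) ≠ 0 := by exact_mod_cast n.ne_zero
  have hN : ((m : ℕ) : ℚ_[p]) + ((n : ℕ) : ℚ_[p]) ≠ 0 := by
    have : (m : ℕ) + (n : ℕ) ≠ 0 := by positivity
    exact_mod_cast this
  have key := aux_pf_s10 _ _ hm hn hN k₁ k₂ h₁ h₂
  calc _ = z ^ ((m : ℕ) + (n : ℕ)) *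
        (1 / (((m : ℕ) : ℚ_[p]) ^ k₁ * ((n : ℕ) : ℚ_[p]) ^ k₂)) := by
        rw [pow_add, div_mul_div_comm, mul_one_div]
    _ = _ := by
        rw [key, mul_add, Finset.mul_sum, Finset.mul_sum]
        congr 1 <;> exact Finset.sum_congr rfl fun i _ => by ring
end
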